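/- arXiv:1801.10410 — 2 statements merged into one kernel-verified Lean document; each statement's English description precedes it below -/
import Mathlib

section
/- Let p be an odd prime and G_p = ⟨x, y : x^{p²} = y^{p²} = 1, [x,y] = x^p⟩. For s, t ∈ ℤ/p, define γ_{s,t} : G_p → Aut(G_p) determined by: γ_{s,t}(x) fixes x and sends y ↦ x^{ps} y; γ_{s,t}(y) sends x ↦ x^{1+pt} and y ↦ y^{1+p(s+t)}; and γ_{s,t} kills Z(G_p). Then γ_{s,t} is well-defined, satisfies γ_{s,t}(gh) = γ_{s,t}(h)γ_{s,t}(g) for all g,h, and γ_{s,t}(g^β) = γ_{s,t}(g)^β for all β ∈ Aut(G_p). -/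
/-- The relators of the presentation
`⟨x, y : x^(p²) = y^(p²) = 1, [x,y] = x^p⟩`, where `[x,y] = x⁻¹y⁻¹xy`. -/
def gpRels (p : ℕ) : Set (FreeGroup (Fin 2)) :=
  { FreeGroup.of 0 ^ p ^ 2, FreeGroup.of 1 ^ p ^ 2,
    (FreeGroup.of 0)⁻¹ * (FreeGroup.of 1)⁻¹ * FreeGroup.of 0 * FreeGroup.of 1
      * (FreeGroup.of 0 ^ p)⁻¹ }

/-- The group `G_p = ⟨x, y : x^(p²) = y^(p²) = 1, [x,y] = x^p⟩`. -/
abbrev GpGroup (p : ℕ) := PresentedGroup (gpRels p)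

/-- The generator `x` of `G_p`. -/
def gpX (p : ℕ) : GpGroup p := PresentedGroup.of 0

/-- The generator `y` of `G_p`. -/
def gpY (p : ℕ) : GpGroup p := PresentedGroup.of 1

namespace Gp

section
variable {p : ℕ}

lemma x_pow : gpX p ^ p ^ 2 = 1 := by
  have := PresentedGroup.one_of_mem (rels := gpRels p) (x := FreeGroup.of 0 ^ p ^ 2)
    (by simp [gpRels])
  simpa [gpX, PresentedGroup.of] using this

lemma y_pow : gpY p ^ p ^ 2 = 1 := by
  have := PresentedGroup.one_of_mem (rels := gpRels p) (x := FreeGroup.of 1 ^ p ^ 2)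
    (by simp [gpRels])
  simpa [gpY, PresentedGroup.of] using this

lemma xy_comm : (gpX p)⁻¹ * (gpY p)⁻¹ * gpX p * gpY p * (gpX p ^ p)⁻¹ = 1 := by
  have := PresentedGroup.one_of_mem (rels := gpRels p)
    (x := (FreeGroup.of 0)⁻¹ * (FreeGroup.of 1)⁻¹ * FreeGroup.of 0 * FreeGroup.of 1
      * (FreeGroup.of 0 ^ p)⁻¹) (by simp [gpRels])
  simpa [gpX, gpY, PresentedGroup.of] using this

lemma x_zpow_congr {i k : ℤ} (h : ((p : ℤ) ^ 2) ∣ i - k) : gpX p ^ i = gpX p ^ k := by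
  obtain ⟨c, hc⟩ := h
  have : i = (p ^ 2 : ℕ) * c + k := by push_cast; linarith
  rw [this, zpow_add, zpow_mul, zpow_natCast, x_pow]; simp

lemma y_zpow_congr {i k : ℤ} (h : ((p : ℤ) ^ 2) ∣ i - k) : gpY p ^ i = gpY p ^ k := by
  obtain ⟨c, hc⟩ := h
  have : i = (p ^ 2 : ℕ) * c + k := by push_cast; linarith
  rw [this, zpow_add, zpow_mul, zpow_natCast, y_pow]; simp

lemma conj_y : (gpY p)⁻¹ * gpX p * gpY p = gpX p ^ (1 + p : ℤ) := by
  have := xy_comm (p := p)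
  rw [mul_inv_eq_one] at this
  rw [zpow_add, zpow_one, zpow_natCast, ← this]; group

lemma comm_a : Commute (gpX p ^ (p : ℤ)) (gpY p) := by
  have h : (gpY p)⁻¹ * (gpX p ^ (p : ℤ)) * gpY p = gpX p ^ (p : ℤ) := by
    have := conj_zpow (i := (p : ℤ)) (a := (gpY p)⁻¹) (b := gpX p)
    rw [inv_inv, conj_y, ← zpow_mul] at this
    rw [← this]
    apply x_zpow_congr
    exact ⟨1, by ring⟩
  rw [Commute, SemiconjBy]
  nth_rewrite 2 [← h]
  group

lemma y_x (j k : ℤ) : gpY p ^ j * gpX p ^ k = gpX p ^ (k - p * j * k) * gpY p ^ j := by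
  have h1 : (gpX p)⁻¹ * gpY p * gpX p = gpY p * (gpX p ^ (p : ℤ))⁻¹ := by
    have h := conj_y (p := p)
    rw [zpow_add, zpow_one] at h
    rw [eq_mul_inv_iff_mul_eq, mul_assoc, ← h]; group
  have h2 := conj_zpow (i := j) (a := (gpX p)⁻¹) (b := gpY p)
  rw [inv_inv, h1, (comm_a (p := p)).symm.inv_right.mul_zpow] at h2
  have h4 : (gpY p ^ j) * gpX p * (gpY p ^ j)⁻¹ = gpX p ^ (1 - p * j : ℤ) := by
    have h5 : gpY p ^ j * gpX p = gpX p * (gpY p ^ j * (gpX p ^ (p : ℤ))⁻¹ ^ j) := by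
      rw [h2]; group
    rw [h5, (((comm_a (p := p)).symm.inv_right.zpow_zpow j j)).eq]
    rw [zpow_sub, zpow_mul, zpow_one]; group
  have h5 := conj_zpow (i := k) (a := gpY p ^ j) (b := gpX p)
  rw [h4, ← zpow_mul] at h5
  rw [show k - p * j * k = (1 - p * j) * k by ring, h5]; group

lemma mul_nf (i j k l : ℤ) : (gpX p ^ i * gpY p ^ j) * (gpX p ^ k * gpY p ^ l) =
    gpX p ^ (i + k - p * j * k) * gpY p ^ (j + l) := by
  rw [show i + k - p * j * k = i + (k - p * j * k) by ring, zpow_add, zpow_add]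
  rw [mul_assoc, ← mul_assoc (gpY p ^ j), y_x]; group

lemma inv_nf (i j : ℤ) : (gpX p ^ i * gpY p ^ j)⁻¹ =
    gpX p ^ (-i - p * j * i) * gpY p ^ (-j) := by
  rw [inv_eq_iff_mul_eq_one, mul_nf]
  have : i + (-i - p * j * i) - p * j * (-i - p * j * i) = p ^ 2 * (j * j * i) := by ring
  rw [this, add_neg_cancel, zpow_zero, mul_one]
  rw [← zpow_zero (gpX p)]
  apply x_zpow_congr; simp

lemma exists_nf (g : GpGroup p) : ∃ i j : ℤ, g = gpX p ^ i * gpY p ^ j := by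
  induction g using PresentedGroup.induction_on with
  | _ z =>
  induction z using FreeGroup.induction_on with
  | C1 => exact ⟨0, 0, by simp⟩
  | of a =>
    fin_cases a
    · exact ⟨1, 0, by simp [gpX, PresentedGroup.of]⟩
    · exact ⟨0, 1, by simp [gpY, PresentedGroup.of]⟩
  | inv_of a h =>
    obtain ⟨i, j, h⟩ := h
    rw [map_inv, h, inv_nf]; exact ⟨_, _, rfl⟩
  | mul a b ha hb =>
    obtain ⟨i, j, ha⟩ := ha
    obtain ⟨k, l, hb⟩ := hb
    rw [map_mul, ha, hb, mul_nf]; exact ⟨_, _, rfl⟩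

lemma pow_nf (i j : ℤ) (n : ℕ) : (gpX p ^ i * gpY p ^ j) ^ n =
    gpX p ^ (n * i - p * j * i * (n.choose 2 : ℕ)) * gpY p ^ (n * j) := by
  induction n with
  | zero => simp
  | succ n ih =>
    rw [pow_succ, ih, mul_nf]
    congr 2
    · rw [Nat.choose_succ_succ' n 1]; push_cast; simp; ring
    · push_cast; ring

lemma powp_nf (hp : p.Prime) (hodd : Odd p) (i j : ℤ) : (gpX p ^ i * gpY p ^ j) ^ p =
    gpX p ^ (p * i) * gpY p ^ (p * j) := by
  rw [pow_nf]
  congr 1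
  apply x_zpow_congr
  have h2 : 2 < p := by
    have := hp.two_le
    rcases hodd with ⟨k, hk⟩; omega
  obtain ⟨c, hc⟩ := hp.dvd_choose_self (k := 2) (by norm_num) h2
  exact ⟨-(j * i * c), by rw [hc]; push_cast; ring⟩

/-- The map `λ` : `x ↦ 0`, `y ↦ 1`, modulo a divisor of `p ^ 2`. -/
def lamHom (p m : ℕ) (hm : (p : ZMod m) ^ 2 = 0) : GpGroup p →* Multiplicative (ZMod m) :=
  PresentedGroup.toGroup (f := fun i : Fin 2 => if i = 0 then 1 else Multiplicative.ofAdd 1) <| by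
    intro r hr
    simp only [gpRels, Set.mem_insert_iff, Set.mem_singleton_iff] at hr
    rcases hr with rfl | rfl | rfl
    · simp
    · simp [← ofAdd_nsmul, hm]
    · simp

lemma lamHom_x (m : ℕ) (hm) : lamHom p m hm (gpX p) = 1 := by
  simp [lamHom, gpX, PresentedGroup.toGroup.of]

lemma lamHom_y (m : ℕ) (hm) : lamHom p m hm (gpY p) = Multiplicative.ofAdd 1 := by
  simp [lamHom, gpY, PresentedGroup.toGroup.of]

/-- The map `λ` modulo `p`. -/
def lam (g : GpGroup p) : ZMod p := (lamHom p p (by simp) g).toAdd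

lemma lam_mul (g h : GpGroup p) : lam (g * h) = lam g + lam h := by simp [lam]
lemma lam_nf (i j : ℤ) : lam (gpX p ^ i * gpY p ^ j) = (j : ZMod p) := by
  simp [lam, lamHom_x, lamHom_y]
lemma lam_one : lam (1 : GpGroup p) = 0 := by simp [lam]
lemma lam_x : lam (gpX p) = 0 := by simp [lam, lamHom_x]
lemma lam_y : lam (gpY p) = 1 := by simp [lam, lamHom_y]

/-- Multiplication by `1 - p` on `ZMod (p ^ 2)`. -/
def permY (p : ℕ) : Equiv.Perm (ZMod (p ^ 2)) where
  toFun n := (1 - p) * n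
  invFun n := (1 + p) * n
  left_inv n := by
    have : (p : ZMod (p ^ 2)) ^ 2 = 0 := by exact_mod_cast ZMod.natCast_self (p ^ 2)
    linear_combination (-n) * this
  right_inv n := by
    have : (p : ZMod (p ^ 2)) ^ 2 = 0 := by exact_mod_cast ZMod.natCast_self (p ^ 2)
    linear_combination (-n) * this

lemma permY_pow (n : ℕ) (m : ZMod (p ^ 2)) : (permY p ^ n) m = (1 - n * p) * m := by
  have : (p : ZMod (p ^ 2)) ^ 2 = 0 := by exact_mod_cast ZMod.natCast_self (p ^ 2)
  induction n with
  | zero => simp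
  | succ n ih =>
    rw [pow_succ' _ n, Equiv.Perm.mul_apply, ih]
    change (1 - (p : ZMod (p ^ 2))) * _ = _
    push_cast
    linear_combination (n * m) * this

lemma permX_pow (n : ℕ) (m : ZMod (p ^ 2)) :
    ((Equiv.addRight (1 : ZMod (p ^ 2)) : Equiv.Perm _) ^ n) m = m + n := by
  induction n with
  | zero => simp
  | succ n ih => rw [pow_succ' _ n, Equiv.Perm.mul_apply, ih]; simp [add_assoc]

/-- An action of `G_p` in which `x` has order `p ^ 2`. -/
def permHom (p : ℕ) : GpGroup p →* Equiv.Perm (ZMod (p ^ 2)) :=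
  PresentedGroup.toGroup
    (f := fun i : Fin 2 => if i = 0 then Equiv.addRight (1 : ZMod (p ^ 2)) else permY p) <| by
    have h0 : (p : ZMod (p ^ 2)) ^ 2 = 0 := by exact_mod_cast ZMod.natCast_self (p ^ 2)
    intro r hr
    simp only [gpRels, Set.mem_insert_iff, Set.mem_singleton_iff] at hr
    rcases hr with rfl | rfl | rfl
    · ext m; simp [h0]
    · ext m; simp [permY_pow, h0]
    · simp only [map_mul, map_inv, map_pow, FreeGroup.lift_apply_of, if_true, one_ne_zero, if_false]
      rw [mul_inv_eq_one, mul_assoc, mul_assoc, inv_mul_eq_iff_eq_mul, inv_mul_eq_iff_eq_mul]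
      ext1 m
      simp only [Equiv.Perm.mul_apply, permX_pow]
      change (1 - (p : ZMod (p ^ 2))) * m + 1 = (1 - (p : ZMod (p ^ 2))) * ((m + p) + 1)
      linear_combination h0

lemma permHom_x : permHom p (gpX p) = Equiv.addRight (1 : ZMod (p ^ 2)) := by
  simp [permHom, gpX, PresentedGroup.toGroup.of]

/-- `E g c = g ^ (p c)`. -/
def E (g : GpGroup p) (c : ZMod p) : GpGroup p := g ^ ((p : ℤ) * (c.cast : ℤ))

lemma dvd_of_mul_eq (hp : p.Prime) {n : ℕ} (h : ((p * n : ℕ) : ZMod (p ^ 2)) = 0) :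
    (n : ZMod p) = 0 := by
  rw [ZMod.natCast_eq_zero_iff, pow_two] at h
  rw [ZMod.natCast_eq_zero_iff]
  exact Nat.dvd_of_mul_dvd_mul_left hp.pos h

lemma E_nat (hp : p.Prime) (g : GpGroup p) (c : ZMod p) : E g c = g ^ (p * c.val) := by
  have := Fact.mk hp
  rw [E, ZMod.cast_eq_val, ← zpow_natCast]; push_cast; rfl

lemma E_x_inj (hp : p.Prime) {c : ZMod p} (h : E (gpX p) c = 1) : c = 0 := by
  have := Fact.mk hp
  have := congrArg (fun g => permHom p g 0) h
  simp only [E_nat hp, map_pow, permHom_x, permX_pow, map_one, Equiv.Perm.one_apply, zero_add]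
    at this
  simpa using dvd_of_mul_eq hp this

lemma E_inj (hp : p.Prime) {c d : ZMod p} (h : E (gpX p) c = E (gpY p) d) : c = 0 ∧ d = 0 := by
  have := Fact.mk hp
  have hd : d = 0 := by
    have := congrArg (fun g => (lamHom p (p ^ 2)
      (by exact_mod_cast ZMod.natCast_self (p ^ 2)) g).toAdd) h
    simp only [E_nat hp, map_pow, lamHom_x, lamHom_y, one_pow, toAdd_one, toAdd_pow, toAdd_ofAdd,
      nsmul_eq_mul, mul_one] at this
    simpa using dvd_of_mul_eq hp this.symm
  refine ⟨?_, hd⟩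
  subst hd
  apply E_x_inj hp
  rw [h]; simp [E]


lemma E_nf (hp : p.Prime) (hodd : Odd p) (i j c : ℤ) :
    E (gpX p ^ i * gpY p ^ j) (c : ZMod p) =
    gpX p ^ (p * i * c) * gpY p ^ (p * j * c) := by
  obtain ⟨d, hd⟩ : (p : ℤ) ∣ ((c : ZMod p).cast : ℤ) - c := by
    rw [← ZMod.intCast_zmod_eq_zero_iff_dvd]; simp
  have hc : Commute (gpX p ^ (p * i : ℤ)) (gpY p ^ (p * j : ℤ)) := by
    rw [Commute, SemiconjBy, y_x]
    congr 1
    apply x_zpow_congr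
    exact ⟨p * j * i, by ring⟩
  rw [E, zpow_mul, zpow_natCast, powp_nf hp hodd, hc.mul_zpow, ← zpow_mul, ← zpow_mul]
  congr 1
  · apply x_zpow_congr
    exact ⟨i * d, by linear_combination (p * i) * hd⟩
  · apply y_zpow_congr
    exact ⟨j * d, by linear_combination (p * j) * hd⟩

lemma E_comm (hp : p.Prime) (hodd : Odd p) (g h : GpGroup p) (c : ZMod p) :
    Commute (E g c) h := by
  obtain ⟨i, j, rfl⟩ := exists_nf g
  obtain ⟨k, l, rfl⟩ := exists_nf h
  obtain ⟨c, rfl⟩ := ZMod.intCast_surjective c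
  rw [E_nf hp hodd, Commute, SemiconjBy, mul_nf, mul_nf, add_comm (p * j * c)]
  congr 1
  apply x_zpow_congr
  exact ⟨l * i * c - j * c * k, by ring⟩

lemma E_mul (hp : p.Prime) (hodd : Odd p) (g h : GpGroup p) (c : ZMod p) :
    E (g * h) c = E g c * E h c := by
  obtain ⟨i, j, rfl⟩ := exists_nf g
  obtain ⟨k, l, rfl⟩ := exists_nf h
  obtain ⟨c, rfl⟩ := ZMod.intCast_surjective c
  rw [mul_nf, E_nf hp hodd, E_nf hp hodd, E_nf hp hodd, mul_nf,
    show p * (j + l) * c = p * j * c + p * l * c by ring]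
  congr 1
  apply x_zpow_congr
  exact ⟨- j * k * c + p * j * c * k * c, by ring⟩

lemma E_add (hp : p.Prime) (hodd : Odd p) (g : GpGroup p) (c d : ZMod p) :
    E g (c + d) = E g c * E g d := by
  obtain ⟨i, j, rfl⟩ := exists_nf g
  obtain ⟨c, rfl⟩ := ZMod.intCast_surjective c
  obtain ⟨d, rfl⟩ := ZMod.intCast_surjective d
  rw [← Int.cast_add, E_nf hp hodd, E_nf hp hodd, E_nf hp hodd, mul_nf,
    show p * j * (c + d) = p * j * c + p * j * d by ring]
  congr 1
  apply x_zpow_congr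
  exact ⟨p * j * c * i * d, by ring⟩

lemma E_E (hp : p.Prime) (hodd : Odd p) (g : GpGroup p) (c d : ZMod p) : E (E g c) d = 1 := by
  obtain ⟨i, j, rfl⟩ := exists_nf g
  obtain ⟨c, rfl⟩ := ZMod.intCast_surjective c
  obtain ⟨d, rfl⟩ := ZMod.intCast_surjective d
  rw [E_nf hp hodd, E_nf hp hodd, x_zpow_congr (k := 0), y_zpow_congr (k := 0)]
  · simp
  · exact ⟨j * c * d, by ring⟩
  · exact ⟨i * c * d, by ring⟩

lemma lam_E (g : GpGroup p) (c : ZMod p) : lam (E g c) = 0 := by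
  simp [lam, E]

lemma E_zero (g : GpGroup p) : E g 0 = 1 := by simp [E]
lemma E_one (c : ZMod p) : E (1 : GpGroup p) c = 1 := by simp [E]
lemma E_map (β : MulAut (GpGroup p)) (g : GpGroup p) (c : ZMod p) : β (E g c) = E (β g) c := by
  simp [E]

lemma comm_formula (hp : p.Prime) (hodd : Odd p) (g h : GpGroup p) :
    g * h * E h (lam g) = h * g * E g (lam h) := by
  obtain ⟨i, j, rfl⟩ := exists_nf g
  obtain ⟨k, l, rfl⟩ := exists_nf h
  rw [lam_nf, lam_nf, E_nf hp hodd, E_nf hp hodd, mul_nf, mul_nf, mul_nf, mul_nf,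
    show j + l + p * l * j = l + j + p * j * l by ring]
  congr 1
  apply x_zpow_congr
  exact ⟨-(j + l) * k * j + (l + j) * i * l, by ring⟩

lemma lam_aut (hp : p.Prime) (hodd : Odd p) (β : MulAut (GpGroup p)) (g : GpGroup p) :
    lam (β g) = lam g := by
  -- the difference of `λ` and `λ ∘ β⁻¹`
  have key : ∀ g h : GpGroup p, E h (lam g - lam (β.symm g)) = E g (lam h - lam (β.symm h)) := by
    intro g h
    have h1 := comm_formula hp hodd g h
    have h2 := congrArg β (comm_formula hp hodd (β.symm g) (β.symm h))
    simp only [map_mul, E_map, MulEquiv.apply_symm_apply] at h2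
    have e1 := E_add hp hodd h (lam g - lam (β.symm g)) (lam (β.symm g))
    have e2 := E_add hp hodd g (lam h - lam (β.symm h)) (lam (β.symm h))
    rw [sub_add_cancel] at e1 e2
    rw [e1, e2, (E_comm hp hodd h _ _).eq, (E_comm hp hodd g _ _).eq, ← mul_assoc, ← mul_assoc,
      h2] at h1
    exact mul_left_cancel h1
  obtain ⟨hy, hx⟩ := E_inj hp (key (gpY p) (gpX p))
  rw [sub_eq_zero] at hx hy
  have all : ∀ g : GpGroup p, lam g = lam (β.symm g) := by
    intro g
    have := key g (gpX p)
    rw [← hx, sub_self, E_zero] at this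
    exact sub_eq_zero.mp (E_x_inj hp this)
  simpa using all (β g)

/-- The map underlying `γ_{s,t}(g)`. -/
def gam (s t : ZMod p) (g h : GpGroup p) : GpGroup p := h * (E g (s * lam h) * E h (t * lam g))

lemma gam_mul_right (hp : p.Prime) (hodd : Odd p) (s t : ZMod p) (g h k : GpGroup p) :
    gam s t g (h * k) = gam s t g h * gam s t g k := by
  simp only [gam, lam_mul, mul_add, E_add hp hodd, E_mul hp hodd]
  have c1 := E_comm hp hodd g k (s * lam h)
  have c2 := E_comm hp hodd h k (t * lam g)
  have c3 := E_comm hp hodd h (E g (s * lam k)) (t * lam g)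
  calc _ = h * k * (E g (s * lam h)) * (E g (s * lam k) * E h (t * lam g)) * E k (t * lam g) := by
        group
    _ = h * (k * E g (s * lam h)) * E h (t * lam g) * E g (s * lam k) * E k (t * lam g) := by
        rw [← c3.eq]; group
    _ = h * E g (s * lam h) * (k * E h (t * lam g)) * E g (s * lam k) * E k (t * lam g) := by
        rw [← c1.eq]; group
    _ = _ := by rw [← c2.eq]; group

lemma gam_mul_left (hp : p.Prime) (hodd : Odd p) (s t : ZMod p) (g h k : GpGroup p) :
    gam s t (g * h) k = gam s t g (gam s t h k) := by
  have c1 := E_comm hp hodd g (E h (s * lam k)) (s * lam k)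
  have c2 := E_comm hp hodd g (E k (t * lam h)) (s * lam k)
  have c3 := E_comm hp hodd k (E k (t * lam g)) (t * lam h)
  have l : lam (gam s t h k) = lam k := by simp [gam, lam_mul, lam_E]
  have e : ∀ c, E (gam s t h k) c = E k c := by
    intro c; simp [gam, E_mul hp hodd, E_E hp hodd]
  rw [gam, gam, l, e]
  simp only [gam, lam_mul, mul_add, E_add hp hodd, E_mul hp hodd]
  calc _ = k * (E g (s * lam k) * E h (s * lam k)) * (E k (t * lam g) * E k (t * lam h)) := by
        group
    _ = k * E h (s * lam k) * (E g (s * lam k) * E k (t * lam h)) * E k (t * lam g) := by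
        rw [c1.eq, ← c3.eq]; group
    _ = _ := by rw [c2.eq]; group

lemma gam_one (s t : ZMod p) (h : GpGroup p) : gam s t 1 h = h := by
  simp [gam, lam_one, E_one, E_zero]

/-- The automorphism `γ_{s,t}(g)`. -/
def gamAut (hp : p.Prime) (hodd : Odd p) (s t : ZMod p) (g : GpGroup p) : MulAut (GpGroup p) where
  toFun := gam s t g
  invFun := gam s t g⁻¹
  left_inv h := by rw [← gam_mul_left hp hodd, inv_mul_cancel, gam_one]
  right_inv h := by rw [← gam_mul_left hp hodd, mul_inv_cancel, gam_one]
  map_mul' := gam_mul_right hp hodd s t g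

lemma gamAut_apply (hp : p.Prime) (hodd : Odd p) (s t : ZMod p) (g h : GpGroup p) :
    gamAut hp hodd s t g h = gam s t g h := rfl

lemma E_x (hp : p.Prime) (hodd : Odd p) (c : ℤ) : E (gpX p) (c : ZMod p) = gpX p ^ (p * c) := by
  simpa using E_nf hp hodd 1 0 c

lemma E_y (hp : p.Prime) (hodd : Odd p) (c : ℤ) : E (gpY p) (c : ZMod p) = gpY p ^ (p * c) := by
  simpa using E_nf hp hodd 0 1 c

lemma center_lam (hp : p.Prime) (hodd : Odd p) (z : GpGroup p)
    (hz : z ∈ Subgroup.center (GpGroup p)) : lam z = 0 := by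
  rw [Subgroup.mem_center_iff] at hz
  have h := comm_formula hp hodd z (gpX p)
  rw [hz, lam_x, E_zero] at h
  exact E_x_inj hp (mul_left_cancel h)

lemma center_E (hp : p.Prime) (hodd : Odd p) (z : GpGroup p)
    (hz : z ∈ Subgroup.center (GpGroup p)) (c : ZMod p) : E z c = 1 := by
  have hl := center_lam hp hodd z hz
  rw [Subgroup.mem_center_iff] at hz
  have h := comm_formula hp hodd z (gpY p)
  rw [hz, lam_y, hl, E_zero] at h
  have h1 : E z 1 = 1 := (mul_left_cancel h).symm
  have := Fact.mk hp
  rw [E_nat hp, ZMod.val_one, mul_one] at h1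
  rw [E_nat hp, pow_mul, h1, one_pow]

end

end Gp

/-- For an odd prime `p`, `G_p = ⟨x, y : x^(p²) = y^(p²) = 1, [x,y] = x^p⟩`,
and `s, t ∈ ℤ/p`, there is a well-defined map `γ_{s,t} : G_p → Aut(G_p)` with
`γ_{s,t}(x) : x ↦ x, y ↦ x^(ps) y`, `γ_{s,t}(y) : x ↦ x^(1+pt),
y ↦ y^(1+p(s+t))`, killing `Z(G_p)`, which is an anti-homomorphism in the
paper's convention (a homomorphism in Mathlib's composition convention) and is
`Aut(G_p)`-equivariant: `γ_{s,t}(g^β) = γ_{s,t}(g)^β`. -/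
theorem stmt_14 (p : ℕ) (hp : p.Prime) (hodd : Odd p) (s t : ℤ) :
    ∃ γ : GpGroup p → MulAut (GpGroup p),
      (γ (gpX p)) (gpX p) = gpX p ∧
      (γ (gpX p)) (gpY p) = gpX p ^ ((p : ℤ) * s) * gpY p ∧
      (γ (gpY p)) (gpX p) = gpX p ^ (1 + (p : ℤ) * t) ∧
      (γ (gpY p)) (gpY p) = gpY p ^ (1 + (p : ℤ) * (s + t)) ∧
      (∀ z ∈ Subgroup.center (GpGroup p), γ z = 1) ∧
      (∀ g h : GpGroup p, γ (g * h) = γ g * γ h) ∧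
      (∀ (β : MulAut (GpGroup p)) (g : GpGroup p), γ (β g) = β * γ g * β⁻¹) := by
  refine ⟨Gp.gamAut hp hodd (s : ZMod p) (t : ZMod p), ?_, ?_, ?_, ?_, ?_, ?_, ?_⟩
  · simp [Gp.gamAut_apply, Gp.gam, Gp.lam_x, Gp.E_zero]
  · simp only [Gp.gamAut_apply, Gp.gam, Gp.lam_x, Gp.lam_y, mul_zero, Gp.E_zero, mul_one]
    rw [← (Gp.E_comm hp hodd _ _ _).eq, Gp.E_x hp hodd]
  · simp only [Gp.gamAut_apply, Gp.gam, Gp.lam_x, Gp.lam_y, mul_zero, Gp.E_zero, mul_one, one_mul]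
    rw [Gp.E_x hp hodd, zpow_add, zpow_one]
  · simp only [Gp.gamAut_apply, Gp.gam, Gp.lam_y, mul_one]
    rw [Gp.E_y hp hodd, Gp.E_y hp hodd, mul_add, zpow_add, zpow_add, zpow_one]
  · intro z hz
    ext h
    simp [Gp.gamAut_apply, Gp.gam, Gp.center_lam hp hodd z hz, Gp.center_E hp hodd z hz, Gp.E_zero]
  · intro g h
    ext k
    rw [MulAut.mul_apply]
    exact Gp.gam_mul_left hp hodd _ _ g h k
  · intro β g
    rw [eq_mul_inv_iff_mul_eq]
    ext k
    simp only [MulAut.mul_apply, Gp.gamAut_apply, Gp.gam, map_mul, Gp.E_map,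
      Gp.lam_aut hp hodd]
end

section
/- Let p > 3 be a prime and G the free group of nilpotency class two and exponent p on n ≥ 2 generators, so V = G/Z(G) = G/G' and W = G' ≅ Λ²V as F_p-vector spaces. Let Δ : V × V → W be a bilinear map satisfying Δ(gβ, hβ) = Δ(g,h)β for every β ∈ GL(V) (acting naturally on W = Λ²V). Then there exists c ∈ F_p such that Δ(g, h) = c·(g ∧ h) for all g, h ∈ V. -/
open ExteriorAlgebra in
/-- On the second exterior power, `P + t(1 - P)` acts quadratically in `t`. -/
lemma aux_map {K V : Type*} [Field K] [AddCommGroup V] [Module K V] (P : V →ₗ[K] V) (t : K)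
    (x : ExteriorAlgebra K V) (hx : x ∈ ⋀[K]^2 V) :
    ExteriorAlgebra.map (P + t • (LinearMap.id - P)) x =
      (1 - t) • ExteriorAlgebra.map P x + t • x
        + (t * t - t) • ExteriorAlgebra.map (LinearMap.id - P) x := by
  rw [← ExteriorAlgebra.ιMulti_span_fixedDegree] at hx
  induction hx using Submodule.span_induction with
  | mem x hx =>
    obtain ⟨a, rfl⟩ := hx
    simp only [ExteriorAlgebra.ιMulti_apply, List.ofFn_succ, List.ofFn_zero, List.prod_cons,
      List.prod_nil, mul_one, map_mul, ExteriorAlgebra.map_apply_ι, LinearMap.add_apply,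
      LinearMap.smul_apply, LinearMap.sub_apply, LinearMap.id_apply, map_add, map_smul, map_sub,
      mul_add, add_mul, mul_sub, sub_mul, smul_mul_assoc, mul_smul_comm, smul_sub]
    module
  | zero => simp
  | add x y _ _ hx hy => rw [map_add, hx, hy, map_add, map_add]; module
  | smul c x _ hx => rw [map_smul, hx, map_smul, map_smul]; module

lemma aux_range {K V : Type*} [Field K] [AddCommGroup V] [Module K V] (P : V →ₗ[K] V) (g h : V)
    (hP : ∀ v, P v ∈ Submodule.span K {g, h})
    (x : ExteriorAlgebra K V) (hx : x ∈ ⋀[K]^2 V) :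
    ∃ c : K, ExteriorAlgebra.map P x = c • (ExteriorAlgebra.ι K g * ExteriorAlgebra.ι K h) := by
  rw [← ExteriorAlgebra.ιMulti_span_fixedDegree] at hx
  induction hx using Submodule.span_induction with
  | mem x hx =>
    obtain ⟨a, rfl⟩ := hx
    obtain ⟨q, r, h0⟩ := Submodule.mem_span_pair.1 (hP (a 0))
    obtain ⟨s, u, h1⟩ := Submodule.mem_span_pair.1 (hP (a 1))
    refine ⟨q * u - r * s, ?_⟩
    have hs : ExteriorAlgebra.ι K h * ExteriorAlgebra.ι K g
        = - (ExteriorAlgebra.ι K g * ExteriorAlgebra.ι K h) :=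
      eq_neg_of_add_eq_zero_left (ExteriorAlgebra.ι_add_mul_swap h g)
    have e1 : ExteriorAlgebra.map P (ExteriorAlgebra.ιMulti K 2 a)
        = ExteriorAlgebra.ι K (P (a 0)) * ExteriorAlgebra.ι K (P (a 1)) := by
      simp only [ExteriorAlgebra.ιMulti_apply, List.ofFn_succ, List.ofFn_zero, List.prod_cons,
        List.prod_nil, mul_one, map_mul, ExteriorAlgebra.map_apply_ι]
      rfl
    rw [e1, ← h0, ← h1]
    simp only [map_add, map_smul, mul_add, add_mul, smul_mul_assoc, mul_smul_comm, hs,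
      ExteriorAlgebra.ι_sq_zero, smul_zero]
    module
  | zero => exact ⟨0, by simp⟩
  | add x y _ _ hx hy =>
    obtain ⟨c, hc⟩ := hx
    obtain ⟨d, hd⟩ := hy
    exact ⟨c + d, by rw [map_add, hc, hd, add_smul]⟩
  | smul c x _ hx =>
    obtain ⟨d, hd⟩ := hx
    exact ⟨c * d, by rw [map_smul, hd, mul_smul]⟩

lemma aux_equiv {K V : Type*} [Field K] [AddCommGroup V] [Module K V] (P : V →ₗ[K] V)
    (hP : ∀ v, P (P v) = P v) (t : K) (ht : t ≠ 0) :
    ∃ β : V ≃ₗ[K] V, (β : V →ₗ[K] V) = P + t • (LinearMap.id - P) := by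
  refine ⟨LinearEquiv.ofLinearMap (P + t • (LinearMap.id - P)) (P + t⁻¹ • (LinearMap.id - P))
    ?_ ?_, ?_⟩
  · ext v
    simp [hP, smul_smul, ht]
  · ext v
    simp [hP, smul_smul, ht]
  · ext v
    simp

lemma aux_pair {K V : Type*} [Field K] [AddCommGroup V] [Module K V]
    (h2 : (2 : K) ≠ 0) (h3 : (3 : K) ≠ 0)
    (Δ : V →ₗ[K] V →ₗ[K] ExteriorAlgebra K V)
    (hW : ∀ g h : V, Δ g h ∈ ⋀[K]^2 V)
    (hequiv : ∀ (β : V ≃ₗ[K] V) (g h : V),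
      Δ (β g) (β h) = ExteriorAlgebra.map (β : V →ₗ[K] V) (Δ g h)) (g h : V) :
    ∃ c : K, Δ g h = c • (ExteriorAlgebra.ι K g * ExteriorAlgebra.ι K h) := by
  set S := Submodule.span K {g, h} with hS
  obtain ⟨f, hf⟩ := S.subtype.exists_leftInverse_of_injective S.ker_subtype
  have hfS : ∀ v : S, f v = v := fun v => LinearMap.congr_fun hf v
  let P : V →ₗ[K] V := S.subtype ∘ₗ f
  have hPS : ∀ v ∈ S, P v = v := fun v hv => congrArg Subtype.val (hfS ⟨v, hv⟩)
  have hPm : ∀ v, P v ∈ S := fun v => (f v).2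
  have hPg : P g = g := hPS g (Submodule.subset_span (by simp))
  have hPh : P h = h := hPS h (Submodule.subset_span (by simp))
  have key : ∀ t : K, t ≠ 0 → Δ g h = (1 - t) • ExteriorAlgebra.map P (Δ g h) + t • (Δ g h)
        + (t * t - t) • ExteriorAlgebra.map (LinearMap.id - P) (Δ g h) := by
    intro t ht
    obtain ⟨β, hβ⟩ := aux_equiv P (fun v => hPS _ (hPm v)) t ht
    have hb : ∀ v, β v = P v + t • (v - P v) := fun v => LinearMap.congr_fun hβ v
    rw [← aux_map P t _ (hW g h), ← hβ, ← hequiv β g h, hb, hb, hPg, hPh]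
    simp
  have k1 := key (-1) (by simp)
  have k2 := key 2 h2
  obtain ⟨c, hc⟩ := aux_range P g h hPm _ (hW g h)
  refine ⟨c, ?_⟩
  rw [← hc]
  have h4 : (3 : K) • (Δ g h - ExteriorAlgebra.map P (Δ g h)) = 0 := by
    linear_combination (norm := module) k1 - k2
  exact sub_eq_zero.1 ((smul_eq_zero.1 h4).resolve_left h3)

/-- Let `p > 3` be prime and `V` an `F_p`-vector space of dimension `n ≥ 2`
(arising as `G/Z(G)` for `G` free of class two and exponent `p` on `n`
generators, with `G' ≅ Λ²V`). If `Δ : V × V → Λ²V` is bilinear and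
`GL(V)`-equivariant, i.e. `Δ(gβ, hβ) = Δ(g,h)β` for every `β ∈ GL(V)` (acting
on `Λ²V ⊆ Λ(V)` via the induced map), then `Δ(g,h) = c·(g ∧ h)` for some
fixed scalar `c ∈ F_p`. -/
theorem stmt_17 (p n : ℕ) [Fact p.Prime] (hp3 : 3 < p) (hn : 2 ≤ n)
    (V : Type*) [AddCommGroup V] [Module (ZMod p) V]
    [FiniteDimensional (ZMod p) V]
    (hdim : Module.finrank (ZMod p) V = n)
    (Δ : V →ₗ[ZMod p] V →ₗ[ZMod p] ExteriorAlgebra (ZMod p) V)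
    (hW : ∀ g h : V, Δ g h ∈ ⋀[ZMod p]^2 V)
    (hequiv : ∀ (β : V ≃ₗ[ZMod p] V) (g h : V),
      Δ (β g) (β h) = ExteriorAlgebra.map (β : V →ₗ[ZMod p] V) (Δ g h)) :
    ∃ c : ZMod p, ∀ g h : V,
      Δ g h = c • (ExteriorAlgebra.ι (ZMod p) g * ExteriorAlgebra.ι (ZMod p) h) := by
  have hc3 : ∀ k : ℕ, 0 < k → k < p → ((k : ℕ) : ZMod p) ≠ 0 := by
    intro k hk hkp h0
    rw [ZMod.natCast_eq_zero_iff] at h0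
    exact absurd (Nat.le_of_dvd hk h0) (by omega)
  have hpair := aux_pair (K := ZMod p) (by simpa using hc3 2 (by omega) (by omega))
    (by simpa using hc3 3 (by omega) (by omega)) Δ hW hequiv
  let e := Module.finBasisOfFinrankEq (ZMod p) V hdim
  let i0 : Fin n := ⟨0, by omega⟩
  let i1 : Fin n := ⟨1, by omega⟩
  have h01 : i0 ≠ i1 := by simp [i0, i1]
  obtain ⟨c, hc⟩ := hpair (e i0) (e i1)
  refine ⟨c, ?_⟩
  have hbasis : Δ = c • (LinearMap.mul (ZMod p) (ExteriorAlgebra (ZMod p) V)).compl₁₂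
      (ExteriorAlgebra.ι (ZMod p)) (ExteriorAlgebra.ι (ZMod p)) := by
    refine e.ext fun i => e.ext fun j => ?_
    simp only [LinearMap.smul_apply, LinearMap.compl₁₂_apply, LinearMap.mul_apply']
    by_cases hij : i = j
    · subst hij
      obtain ⟨d, hd⟩ := hpair (e i) (e i)
      rw [hd, ExteriorAlgebra.ι_sq_zero, smul_zero, smul_zero]
    · let σ : Equiv.Perm (Fin n) := (Equiv.swap i0 i).trans
        (Equiv.swap (Equiv.swap i0 i i1) j)
      have hσ1 : σ i1 = j := by simp [σ]
      have hσ0 : σ i0 = i := by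
        have hne : i ≠ Equiv.swap i0 i i1 := by
          intro h
          apply h01
          apply (Equiv.swap i0 i).injective
          rw [← h, Equiv.swap_apply_left]
        simp only [σ, Equiv.trans_apply, Equiv.swap_apply_left]
        exact Equiv.swap_apply_of_ne_of_ne hne hij
      have hβ := hequiv (e.equiv e σ) (e i0) (e i1)
      rw [hc, Module.Basis.equiv_apply, Module.Basis.equiv_apply, hσ0, hσ1] at hβ
      rw [hβ]
      simp [hσ0, hσ1]
  intro g h
  rw [hbasis]
  rfl
end
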